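/- For all letters a, b, c ∈ {0,1,2}, every v ∈ h(ab) and every v' ∈ h(c), the word v' does not occur as an internal factor of v; that is, the only possible occurrences of v' in v are as a prefix or as a suffix of v. -/

import Mathlib

/-- A word is *square-free* if it contains no factor of the form `u ++ u`
with `u` nonempty. -/
def SqFree {α : Type*} (w : List α) : Prop :=
  ∀ u : List α, u ≠ [] → ¬ (u ++ u) <:+: w

/-- The word `p̂ = 1202120121021201021`. -/
def phat : List (Fin 3) := [1,2,0,2,1,2,0,1,2,1,0,2,1,2,0,1,0,2,1]

/-- The palindrome `p = mirror(p̂) ++ 0 ++ p̂`. -/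
def pal : List (Fin 3) := phat.reverse ++ 0 :: phat

/-- The number of occurrences of a (nonempty) word `u` as a factor of `v`. -/
def occCount (u v : List (Fin 3)) : ℕ :=
  (List.range v.length).countP (fun i => (v.drop i).take u.length == u)

/-- A word `v` is *nice* if `p v p` is square-free and contains exactly two
occurrences of `p̂` and exactly two occurrences of its mirror image. -/
def IsNice (v : List (Fin 3)) : Prop :=
  SqFree (pal ++ v ++ pal) ∧ occCount phat (pal ++ v ++ pal) = 2 ∧
    occCount phat.reverse (pal ++ v ++ pal) = 2

/-- `lword n` is the lexicographically least nice word of length `n`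
(the empty word if no nice word of length `n` exists). -/
noncomputable def lword (n : ℕ) : List (Fin 3) := by
  classical
  exact if h : {w : List (Fin 3) | IsNice w ∧ w.length = n}.Nonempty then
    Set.IsWF.min
      (Set.Finite.isWF
        ((List.finite_length_eq (Fin 3) n).subset (fun _ hw => hw.2))) h
  else []

/-- A set of words is *mirror-free* if it does not contain both a word and its
(distinct) mirror image. -/
def MirrorFree (S : Set (List (Fin 3))) : Prop :=
  ∀ w ∈ S, w ≠ w.reverse → w.reverse ∉ S

/-- `S` is an `n`-good set: a mirror-free set of nice words of length `n` such that
for all `i ∈ {2n+100, …, 7n}` and all distinct `u v ∈ S`, the words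
`p u p v p lᵢ`, `p ū p v p lᵢ`, `p u p v̄ p l̄ᵢ` and `p ū p v̄ p l̄ᵢ` are square-free. -/
def GoodSet (n : ℕ) (S : Set (List (Fin 3))) : Prop :=
  (∀ w ∈ S, IsNice w ∧ w.length = n) ∧ MirrorFree S ∧
    ∀ i : ℕ, 2 * n + 100 ≤ i → i ≤ 7 * n → ∀ u ∈ S, ∀ v ∈ S, u ≠ v →
      SqFree (pal ++ u ++ pal ++ v ++ pal ++ lword i) ∧
      SqFree (pal ++ u.reverse ++ pal ++ v ++ pal ++ lword i) ∧
      SqFree (pal ++ u ++ pal ++ v.reverse ++ pal ++ (lword i).reverse) ∧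
      SqFree (pal ++ u.reverse ++ pal ++ v.reverse ++ pal ++ (lword i).reverse)

/-- `mirrorIf r w` is the mirror image of `w` if `r = true`, and `w` itself otherwise. -/
def mirrorIf (r : Bool) (w : List (Fin 3)) : List (Fin 3) :=
  if r then w.reverse else w

/-- The nondeterministic substitution `h`. -/
def himg : Fin 3 → Set (List (Fin 3)) :=
  ![{[0,1,2,1,0,2,1,2,0,2,1,0,2,0,1,0,2,1,2,0,1,2,1,0],
     [0,1,2,1,0,2,1,2,0,2,1,0,2,0,1,2,0,2,1,2,0,1,2,1,0]},
    {[1,2,0,2,1,0,2,0,1,0,2,1,0,1,2,1,0,2,0,1,2,0,2,1],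
     [1,2,0,2,1,0,2,0,1,0,2,1,0,1,2,0,1,0,2,0,1,2,0,2,1]},
    {[2,0,1,0,2,1,0,1,2,1,0,2,1,2,0,2,1,0,1,2,0,1,0,2],
     [2,0,1,0,2,1,0,1,2,1,0,2,1,2,0,1,2,1,0,1,2,0,1,0,2]}]

/-- `v` is an image of `w` under the substitution `h`: `v` is obtained by replacing
each letter `c` of `w` by some word of `himg c`. -/
def IsImage (w v : List (Fin 3)) : Prop :=
  ∃ vs : List (List (Fin 3)), List.Forall₂ (fun c u => u ∈ himg c) w vs ∧ v = vs.flatten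

/-- All images of letters, as a list. -/
def hlist : List (List (Fin 3)) :=
  [[0,1,2,1,0,2,1,2,0,2,1,0,2,0,1,0,2,1,2,0,1,2,1,0],
   [0,1,2,1,0,2,1,2,0,2,1,0,2,0,1,2,0,2,1,2,0,1,2,1,0],
   [1,2,0,2,1,0,2,0,1,0,2,1,0,1,2,1,0,2,0,1,2,0,2,1],
   [1,2,0,2,1,0,2,0,1,0,2,1,0,1,2,0,1,0,2,0,1,2,0,2,1],
   [2,0,1,0,2,1,0,1,2,1,0,2,1,2,0,2,1,0,1,2,0,1,0,2],
   [2,0,1,0,2,1,0,1,2,1,0,2,1,2,0,1,2,1,0,1,2,0,1,0,2]]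

theorem mem_hlist (c : Fin 3) (u : List (Fin 3)) (h : u ∈ himg c) : u ∈ hlist := by
  fin_cases c <;> simp [himg] at h <;> rcases h with rfl | rfl <;> simp [hlist]

theorem hlist_check : (hlist.all fun u => hlist.all fun v => hlist.all fun w =>
    (List.range 51).all fun i => i == 0 || !(w.isPrefixOf ((u ++ v).drop i)) ||
      Nat.beq (i + w.length) (u ++ v).length) = true := by
  decide +kernel

theorem hlist_len (u : List (Fin 3)) (h : u ∈ hlist) : u.length ≤ 25 := by
  revert u; decide

/-- Images of single letters under `h` only occur in images of two-letter words
as prefixes or suffixes, never internally. -/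
theorem h_synchronizes (a b c : Fin 3) (v : List (Fin 3)) (hv : IsImage [a, b] v)
    (v' : List (Fin 3)) (hv' : v' ∈ himg c)
    (x y : List (Fin 3)) (hxy : v = x ++ v' ++ y) :
    x = [] ∨ y = [] := by
  obtain ⟨vs, hvs, rfl⟩ := hv
  cases hvs with
  | cons h1 hr =>
  cases hr with
  | cons h2 hr =>
  cases hr with
  | nil =>
  rename_i u w
  have m1 := mem_hlist _ _ h1
  have m2 := mem_hlist _ _ h2
  have m3 := mem_hlist _ _ hv'
  have l1 := hlist_len _ m1
  have l2 := hlist_len _ m2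
  have e : u ++ w = x ++ (v' ++ y) := by simpa using hxy
  have hl : u.length + w.length = x.length + (v'.length + y.length) := by
    simpa using congrArg List.length e
  have key := hlist_check
  simp only [List.all_eq_true] at key
  have k := key u m1 w m2 v' m3 x.length (List.mem_range.2 (by omega))
  have hp : v'.isPrefixOf ((u ++ w).drop x.length) = true := by
    rw [e]; simp
  rw [hp] at k
  simp only [Bool.not_true, Bool.or_false, Bool.or_eq_true, beq_iff_eq, Nat.beq_eq,
    List.length_append] at k
  rcases k with k | k
  · left; exact List.length_eq_zero_iff.1 k
  · right; apply List.length_eq_zero_iff.1; omega
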